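/- arXiv:2508.04209 — 3 statements merged into one kernel-verified Lean document; each statement's English description precedes it below -/
import Mathlib

section
/- Let k ≥ 1 and let G = (V,E) be a finite simple graph with |V| ≥ k that is square-free, i.e., contains no cycle of length 4. Then ∑_{i=1}^{k} λ_i(L(G)) ≤ |E| + ⌊k(1 + √(8k − 3))/2⌋. -/
open Finset

/-- The `i`-th largest entry (1-indexed, so `i = 1` gives the maximum) of a tuple
`f : Fin n → ℝ`, counted with multiplicity. Junk value `0` outside the range `1 ≤ i ≤ n`. -/
noncomputable def ithLargest {n : ℕ} (f : Fin n → ℝ) (i : ℕ) : ℝ :=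
  if h : 1 ≤ i ∧ i ≤ n then f (Tuple.sort f (Fin.rev ⟨i - 1, by omega⟩)) else 0

/-- The eigenvalues of the Laplacian matrix of a finite simple graph `G`
(as a tuple indexed by the vertices, with multiplicity). -/
noncomputable def lapEigs {n : ℕ} (G : SimpleGraph (Fin n)) [DecidableRel G.Adj] :
    Fin n → ℝ :=
  (SimpleGraph.posSemidef_lapMatrix ℝ G).isHermitian.eigenvalues

/-- The degree sequence of `G`, as a real-valued tuple indexed by the vertices. -/
noncomputable def degTuple {n : ℕ} (G : SimpleGraph (Fin n)) [DecidableRel G.Adj] :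
    Fin n → ℝ :=
  fun v => (G.degree v : ℝ)

/-!
Let `P` be the orthogonal projection onto the span of `k` eigenvectors of `L(G)`. The sum of their
eigenvalues is `tr (P L(G)) = ∑_{uv ∈ E} (P u u + P v v - 2 P u v)`. With `x u = min 1 (2 P u u)`,
the excess of this sum over `|E|` is at most
`∑_{uv ∈ E} max 0 (x u + x v - 1) + ∑_u (2 P u u - x u)`; where `P u u > 1/2 > P v v`, the part of
the excess not covered by the first sum is charged to `u` in proportion to `P u v ^ 2`, and
`∑_{v ≠ u} P u v ^ 2 = P u u (1 - P u u)` bounds the total charge by the second sum.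

The bound is convex in `x`, and `x` lies in the part of the unit cube with coordinate sum between
`k` and `2k`, whose vertices are indicators. So it is at most `e(G[U]) + 2k - |U|` for some set `U`
with `k ≤ |U| ≤ 2k`. Finally `e(G[U]) ≤ f |U|` with `f x = x (1 + √(4x - 3)) / 4`, by Reiman's bound
for graphs without 4-cycles, and `f x - x` is increasing, so the worst case is `|U| = 2k`, with
value `f (2k) = k (1 + √(8k - 3)) / 2`.
-/

section StarProjection

variable {V : Type*} [Fintype V] {P : Matrix V V ℝ}

lemma apply_eq_sum_mul_of_isStarProjection (hP : IsStarProjection P) (u v : V) :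
    P u v = ∑ w, P u w * P v w := by
  have hmul : P * star P = P := by rw [hP.isSelfAdjoint.star_eq, hP.isIdempotentElem.eq]
  simpa [Matrix.mul_apply, Matrix.star_apply] using (congrFun₂ hmul u v).symm

lemma diag_eq_sum_sq_of_isStarProjection (hP : IsStarProjection P) (u : V) :
    P u u = ∑ v, P u v ^ 2 := by
  simpa only [sq] using apply_eq_sum_mul_of_isStarProjection hP u u

lemma apply_comm_of_isStarProjection (hP : IsStarProjection P) (u v : V) : P u v = P v u := by
  simpa [Matrix.star_apply] using (congrFun₂ hP.isSelfAdjoint.star_eq u v).symm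

lemma diag_nonneg_of_isStarProjection (hP : IsStarProjection P) (u : V) : 0 ≤ P u u := by
  rw [diag_eq_sum_sq_of_isStarProjection hP]
  positivity

lemma diag_le_one_of_isStarProjection (hP : IsStarProjection P) (u : V) : P u u ≤ 1 := by
  classical
  simpa using diag_nonneg_of_isStarProjection hP.one_sub u

lemma apply_sq_le_of_isStarProjection (hP : IsStarProjection P) (u v : V) :
    P u v ^ 2 ≤ P u u * P v v := by
  rw [apply_eq_sum_mul_of_isStarProjection hP u v, diag_eq_sum_sq_of_isStarProjection hP u,
    diag_eq_sum_sq_of_isStarProjection hP v]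
  exact sum_mul_sq_le_sq_mul_sq _ _ _

lemma two_mul_abs_apply_le_of_isStarProjection (hP : IsStarProjection P) (u v : V) :
    2 * |P u v| ≤ P u u + P v v := by
  have hu := diag_nonneg_of_isStarProjection hP u
  have hv := diag_nonneg_of_isStarProjection hP v
  have hsq : (2 * |P u v|) ^ 2 ≤ (P u u + P v v) ^ 2 := by
    rw [mul_pow, sq_abs]
    nlinarith [apply_sq_le_of_isStarProjection hP u v, sq_nonneg (P u u - P v v)]
  exact le_of_sq_le_sq hsq (add_nonneg hu hv)

lemma diag_add_diag_sub_two_mul_le_two (hP : IsStarProjection P) {u v : V} (huv : u ≠ v) :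
    P u u + P v v - 2 * P u v ≤ 2 := by
  classical
  have h := two_mul_abs_apply_le_of_isStarProjection hP.one_sub u v
  simp only [Matrix.sub_apply, Matrix.one_apply_eq, Matrix.one_apply_ne huv, zero_sub,
    abs_neg] at h
  linarith [neg_abs_le (P u v)]

lemma sum_apply_sq_le_of_notMem (hP : IsStarProjection P) {s : Finset V} {u : V} (hu : u ∉ s) :
    ∑ v ∈ s, P u v ^ 2 ≤ P u u * (1 - P u u) := by
  classical
  have hle : ∑ v ∈ insert u s, P u v ^ 2 ≤ ∑ v, P u v ^ 2 :=
    sum_le_univ_sum_of_nonneg fun _ ↦ sq_nonneg _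
  rw [sum_insert hu, ← diag_eq_sum_sq_of_isStarProjection hP] at hle
  linarith

end StarProjection

section EigenProjection

variable {𝕜 n : Type*} [RCLike 𝕜] [Fintype n] [DecidableEq n] {A : Matrix n n 𝕜}

/-- The orthogonal projection onto the span of the eigenvectors of a Hermitian matrix `A` whose
indices lie in `S`. -/
noncomputable def eigenProjection (hA : A.IsHermitian) (S : Finset n) : Matrix n n 𝕜 :=
  Unitary.conjStarAlgAut 𝕜 _ hA.eigenvectorUnitary
    (Matrix.diagonal fun j ↦ if j ∈ S then 1 else 0)

lemma isStarProjection_eigenProjection (hA : A.IsHermitian) (S : Finset n) :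
    IsStarProjection (eigenProjection hA S) := by
  refine IsStarProjection.map ⟨?_, ?_⟩ _
  · simp [IsIdempotentElem]
  · simp [IsSelfAdjoint, Matrix.star_eq_conjTranspose, Matrix.diagonal_conjTranspose, apply_ite,
      Pi.star_def]

lemma trace_conjStarAlgAut (U : unitary (Matrix n n 𝕜)) (M : Matrix n n 𝕜) :
    (Unitary.conjStarAlgAut 𝕜 _ U M).trace = M.trace := by
  rw [Unitary.conjStarAlgAut_apply, Matrix.trace_mul_cycle, Unitary.coe_star_mul_self, one_mul]

lemma trace_eigenProjection (hA : A.IsHermitian) (S : Finset n) :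
    (eigenProjection hA S).trace = #S := by
  rw [eigenProjection, trace_conjStarAlgAut]
  simp [Matrix.trace_diagonal]

lemma trace_eigenProjection_mul (hA : A.IsHermitian) (S : Finset n) :
    (eigenProjection hA S * A).trace = ∑ j ∈ S, (hA.eigenvalues j : 𝕜) := by
  have hmul : eigenProjection hA S * A = Unitary.conjStarAlgAut 𝕜 _ hA.eigenvectorUnitary
      (Matrix.diagonal (fun j ↦ if j ∈ S then 1 else 0) *
        Matrix.diagonal (RCLike.ofReal ∘ hA.eigenvalues)) := by
    rw [map_mul, ← hA.spectral_theorem, eigenProjection]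
  rw [hmul, trace_conjStarAlgAut]
  simp [Matrix.trace_diagonal]

end EigenProjection

section CubeSlab

lemma add_mem_Icc_zero_one {c t : ℝ} (ht : |t| ≤ min c (1 - c)) : c + t ∈ Set.Icc (0 : ℝ) 1 := by
  obtain ⟨h₀, h₁⟩ := le_min_iff.mp ht
  constructor <;> linarith [neg_abs_le t, le_abs_self t]

lemma eq_zero_of_add_mem_of_sub_mem {E : Type*} [AddCommGroup E] [Module ℝ E] {s : Set E}
    {x d : E} (hx : x ∈ s.extremePoints ℝ) (hadd : x + d ∈ s) (hsub : x - d ∈ s) : d = 0 := by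
  have hmid : x ∈ openSegment ℝ (x + d) (x - d) :=
    ⟨1 / 2, 1 / 2, by norm_num, by norm_num, by norm_num, by module⟩
  simpa using hx.2 hadd hsub hmid

/-- The part of the unit cube where the coordinate sum lies between the integers `a` and `b`. It is
the convex hull of the indicators of the sets of between `a` and `b` elements. -/
def cubeSlab (ι : Type*) [Fintype ι] (a b : ℕ) : Set (ι → ℝ) :=
  (Set.univ.pi fun _ ↦ Set.Icc 0 1) ∩ (fun x ↦ ∑ i, x i) ⁻¹' Set.Icc a b

variable {ι : Type*} [Fintype ι] {a b : ℕ} {x : ι → ℝ}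

lemma isLinearMap_sum_apply : IsLinearMap ℝ fun x : ι → ℝ ↦ ∑ i, x i :=
  ⟨fun _ _ ↦ sum_add_distrib, fun _ _ ↦ (mul_sum _ _ _).symm⟩

lemma mem_cubeSlab :
    x ∈ cubeSlab ι a b ↔ (∀ i, x i ∈ Set.Icc (0 : ℝ) 1) ∧ ∑ i, x i ∈ Set.Icc (a : ℝ) b := by
  rw [cubeSlab, Set.mem_inter_iff, Set.mem_univ_pi, Set.mem_preimage]

lemma convex_cubeSlab : Convex ℝ (cubeSlab ι a b) :=
  (convex_pi fun _ _ ↦ convex_Icc _ _).inter <|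
    (convex_Icc _ _).is_linear_preimage isLinearMap_sum_apply

lemma isCompact_cubeSlab : IsCompact (cubeSlab ι a b) :=
  (isCompact_univ_pi fun _ ↦ isCompact_Icc).inter_right <| isClosed_Icc.preimage <| by fun_prop

lemma exists_sum_eq_natCast_add {i : ι} (h : ∀ j ≠ i, x j = 0 ∨ x j = 1) :
    ∃ m : ℕ, ∑ j, x j = m + x i := by
  classical
  refine ⟨#{j ∈ univ.erase i | x j = 1}, ?_⟩
  rw [← sum_erase_add _ _ (mem_univ i), natCast_card_filter]
  congr 1
  refine sum_congr rfl fun j hj ↦ ?_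
  rcases h j (ne_of_mem_erase hj) with hj | hj <;> simp [hj]

lemma add_single_mem_cubeSlab [DecidableEq ι] (hx : x ∈ cubeSlab ι a b) {i : ι}
    (hi : x i ∈ Set.Ioo (0 : ℝ) 1) (hother : ∀ j ≠ i, x j = 0 ∨ x j = 1)
    {t : ℝ} (ht : |t| ≤ min (x i) (1 - x i)) : x + Pi.single i t ∈ cubeSlab ι a b := by
  rw [mem_cubeSlab] at hx ⊢
  have hit := add_mem_Icc_zero_one ht
  refine ⟨fun j ↦ ?_, ?_⟩
  · obtain rfl | hji := eq_or_ne j i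
    · simpa using hit
    · simpa [hji] using hx.1 j
  · obtain ⟨m, hm⟩ := exists_sum_eq_natCast_add hother
    have ham : (a : ℝ) ≤ m := by
      have : (a : ℝ) < m + 1 := by linarith [hx.2.1, hi.2]
      exact_mod_cast Nat.lt_add_one_iff.mp (mod_cast this)
    have hmb : (m : ℝ) + 1 ≤ b := by
      have : (m : ℝ) < b := by linarith [hx.2.2, hi.1]
      exact_mod_cast Nat.succ_le_iff.mpr (mod_cast this)
    have hsum : ∑ j, (x + Pi.single i t : ι → ℝ) j = m + (x i + t) := by
      simp [sum_add_distrib, hm, add_assoc]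
    rw [hsum]
    constructor <;> linarith [hit.1, hit.2]

lemma add_single_sub_single_mem_cubeSlab [DecidableEq ι] (hx : x ∈ cubeSlab ι a b) {i j : ι}
    (hij : i ≠ j) {t : ℝ} (hi : |t| ≤ min (x i) (1 - x i)) (hj : |t| ≤ min (x j) (1 - x j)) :
    x + (Pi.single i t - Pi.single j t) ∈ cubeSlab ι a b := by
  rw [mem_cubeSlab] at hx ⊢
  refine ⟨fun l ↦ ?_, by simpa [sum_add_distrib] using hx.2⟩
  obtain rfl | hli := eq_or_ne l i
  · simpa [hij] using add_mem_Icc_zero_one hi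
  obtain rfl | hlj := eq_or_ne l j
  · have hjt := add_mem_Icc_zero_one ((abs_neg t).trans_le hj)
    simpa [hij.symm] using hjt
  · simpa [hli, hlj] using hx.1 l

lemma exists_ne_mem_Ioo_of_mem_extremePoints_cubeSlab
    (hx : x ∈ (cubeSlab ι a b).extremePoints ℝ) {i : ι} (hi : x i ∈ Set.Ioo (0 : ℝ) 1) :
    ∃ j ≠ i, x j ∈ Set.Ioo (0 : ℝ) 1 := by
  classical
  by_contra! hnone
  have hother (j : ι) (hj : j ≠ i) : x j = 0 ∨ x j = 1 := by
    obtain ⟨h₀, h₁⟩ := (mem_cubeSlab.mp hx.1).1 j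
    have hlt : 0 < x j → 1 ≤ x j := by simpa using hnone j hj
    exact h₀.eq_or_lt.imp Eq.symm fun h ↦ h₁.antisymm (hlt h)
  set t := min (x i) (1 - x i)
  have htpos : 0 < t := lt_min hi.1 (sub_pos.mpr hi.2)
  have ht : |t| = t := abs_of_pos htpos
  have hadd := add_single_mem_cubeSlab hx.1 hi hother ht.le
  have hsub := add_single_mem_cubeSlab hx.1 hi hother ((abs_neg t).trans ht).le
  rw [Pi.single_neg, ← sub_eq_add_neg] at hsub
  exact htpos.ne' (Pi.single_eq_zero_iff.mp (eq_zero_of_add_mem_of_sub_mem hx hadd hsub))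

lemma notMem_Ioo_of_mem_extremePoints_cubeSlab (hx : x ∈ (cubeSlab ι a b).extremePoints ℝ)
    (i : ι) : x i ∉ Set.Ioo (0 : ℝ) 1 := by
  classical
  intro hi
  obtain ⟨j, hji, hj⟩ := exists_ne_mem_Ioo_of_mem_extremePoints_cubeSlab hx hi
  set t := min (min (x i) (1 - x i)) (min (x j) (1 - x j))
  have htpos : 0 < t :=
    lt_min (lt_min hi.1 (sub_pos.mpr hi.2)) (lt_min hj.1 (sub_pos.mpr hj.2))
  have hti : |t| ≤ min (x i) (1 - x i) := (abs_of_pos htpos).trans_le (min_le_left _ _)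
  have htj : |t| ≤ min (x j) (1 - x j) := (abs_of_pos htpos).trans_le (min_le_right _ _)
  have hadd := add_single_sub_single_mem_cubeSlab hx.1 hji.symm hti htj
  have hsub := add_single_sub_single_mem_cubeSlab hx.1 hji htj hti
  rw [← neg_sub, ← sub_eq_add_neg] at hsub
  simpa [hji.symm, htpos.ne'] using congrFun (eq_zero_of_add_mem_of_sub_mem hx hadd hsub) i

lemma exists_finset_indicator_eq (hx : x ∈ cubeSlab ι a b)
    (hfrac : ∀ i, x i ∉ Set.Ioo (0 : ℝ) 1) :
    ∃ U : Finset ι, #U ∈ Set.Icc a b ∧ (U : Set ι).indicator 1 = x := by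
  classical
  obtain ⟨hcube, hslab⟩ := mem_cubeSlab.mp hx
  let U : Finset ι := {i | x i = 1}
  have hU : (U : Set ι).indicator 1 = x := by
    ext i
    rcases Set.eq_endpoints_or_mem_Ioo_of_mem_Icc (hcube i) with hi | hi | hi
    · simp [U, hi]
    · simp [U, hi]
    · exact absurd hi (hfrac i)
  have hsum : ∑ i, x i = #U := by
    rw [← hU]
    simp [Set.indicator_apply]
  rw [hsum, Set.mem_Icc] at hslab
  exact ⟨U, mod_cast hslab, hU⟩

lemma cubeSlab_subset_convexHull : cubeSlab ι a b ⊆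
    convexHull ℝ ((fun U : Finset ι ↦ (U : Set ι).indicator 1) '' {U | #U ∈ Set.Icc a b}) := by
  rw [← closure_convexHull_extremePoints isCompact_cubeSlab convex_cubeSlab]
  refine closure_minimal (convexHull_mono fun x hx ↦ ?_) ((Set.toFinite _).isClosed_convexHull ℝ)
  exact exists_finset_indicator_eq hx.1 (notMem_Ioo_of_mem_extremePoints_cubeSlab hx)

lemma exists_finset_le_apply_indicator {F : (ι → ℝ) → ℝ} (hF : ConvexOn ℝ Set.univ F)
    (hx : x ∈ cubeSlab ι a b) :
    ∃ U : Finset ι, #U ∈ Set.Icc a b ∧ F x ≤ F ((U : Set ι).indicator 1) := by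
  obtain ⟨_, ⟨U, hU, rfl⟩, hle⟩ :=
    hF.exists_ge_of_mem_convexHull (Set.subset_univ _) (cubeSlab_subset_convexHull hx)
  exact ⟨U, hU, hle⟩

end CubeSlab

section Reiman

/-- Reiman's upper bound for the number of edges of a graph without 4-cycles on `x` vertices. -/
noncomputable def reimanBound (x : ℝ) : ℝ :=
  x * (1 + √(4 * x - 3)) / 4

lemma reimanBound_sub_self {x : ℝ} (hx : 3 / 4 ≤ x) :
    reimanBound x - x = ((√(4 * x - 3) - 1) ^ 3 - 8) / 16 := by
  have hsq : √(4 * x - 3) ^ 2 = 4 * x - 3 := Real.sq_sqrt (by linarith)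
  rw [reimanBound]
  linear_combination (3 - √(4 * x - 3)) / 16 * hsq

lemma monotoneOn_reimanBound_sub_self :
    MonotoneOn (fun x ↦ reimanBound x - x) (Set.Ici (3 / 4)) := by
  intro x hx y hy hxy
  have hcube : (√(4 * x - 3) - 1) ^ 3 ≤ (√(4 * y - 3) - 1) ^ 3 :=
    (Odd.strictMono_pow (by decide)).monotone (by gcongr)
  simp only [reimanBound_sub_self hx, reimanBound_sub_self hy]
  linarith

variable {V : Type*} {G : SimpleGraph V}

lemma pairwise_subsingleton_commonNeighbors_of_squareFree
    (hG : ∀ (v : V) (c : G.Walk v v), c.IsCycle → c.length ≠ 4) :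
    Pairwise fun u w ↦ (G.commonNeighbors u w).Subsingleton := by
  rintro u w huw v ⟨huv, hwv⟩ v' ⟨huv', hwv'⟩
  rw [SimpleGraph.mem_neighborSet] at huv hwv huv' hwv'
  by_contra hne
  let c : G.Walk u u := .cons huv (.cons hwv.symm (.cons hwv' (.cons huv'.symm .nil)))
  have hc : c.IsCycle := by
    have := huv.ne
    have := hwv.ne
    have := huv'.ne
    have := hwv'.ne
    simp only [c, SimpleGraph.Walk.cons_isCycle_iff, SimpleGraph.Walk.cons_isPath_iff,
      SimpleGraph.Walk.isPath_iff_nil, SimpleGraph.Walk.nil_nil, SimpleGraph.Walk.support_nil,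
      SimpleGraph.Walk.support_cons, SimpleGraph.Walk.edges_cons, SimpleGraph.Walk.edges_nil,
      List.mem_cons, List.not_mem_nil, Sym2.eq_iff]
    grind
  exact hG u c hc rfl

lemma pairwise_subsingleton_commonNeighbors_induce
    (hG : Pairwise fun u w ↦ (G.commonNeighbors u w).Subsingleton) (s : Set V) :
    Pairwise fun u w ↦ ((G.induce s).commonNeighbors u w).Subsingleton :=
  fun _ _ huw _ hx _ hy ↦ Subtype.ext (hG (Subtype.coe_ne_coe.mpr huw) hx hy)

variable [Fintype V] [DecidableRel G.Adj]

lemma sum_card_offDiag_neighborFinset_le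
    (hG : Pairwise fun u w ↦ (G.commonNeighbors u w).Subsingleton) :
    ∑ v, #(G.neighborFinset v).offDiag ≤ #(univ : Finset V).offDiag := by
  rw [← card_sigma]
  refine card_le_card_of_injOn Sigma.snd ?_ ?_
  · rintro ⟨v, u, w⟩ hv
    simp only [coe_sigma, Set.mem_sigma_iff, mem_coe, mem_offDiag] at hv ⊢
    exact ⟨mem_univ _, mem_univ _, hv.2.2.2⟩
  · rintro ⟨v, u, w⟩ hv ⟨v', u', w'⟩ hv' ⟨⟩
    simp only [coe_sigma, Set.mem_sigma_iff, mem_coe, mem_offDiag,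
      SimpleGraph.mem_neighborFinset] at hv hv'
    obtain rfl : v = v' :=
      hG hv.2.2.2 ⟨hv.2.1.symm, hv.2.2.1.symm⟩ ⟨hv'.2.1.symm, hv'.2.2.1.symm⟩
    rfl

lemma sum_degree_sq_add_card_le
    (hG : Pairwise fun u w ↦ (G.commonNeighbors u w).Subsingleton) :
    ∑ v, G.degree v ^ 2 + Fintype.card V ≤ 2 * #G.edgeFinset + Fintype.card V ^ 2 := by
  have hdeg (v : V) : G.degree v ^ 2 = #(G.neighborFinset v).offDiag + G.degree v := by
    rw [offDiag_card, G.card_neighborFinset_eq_degree, sq, Nat.sub_add_cancel (Nat.le_mul_self _)]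
  have hcard : #(univ : Finset V).offDiag + Fintype.card V = Fintype.card V ^ 2 := by
    rw [offDiag_card, card_univ, sq, Nat.sub_add_cancel (Nat.le_mul_self _)]
  simp only [hdeg, sum_add_distrib, G.sum_degrees_eq_twice_card_edges]
  linarith [sum_card_offDiag_neighborFinset_le hG]

lemma sq_two_mul_card_edgeFinset_add_sq_le
    (hG : Pairwise fun u w ↦ (G.commonNeighbors u w).Subsingleton) :
    (2 * #G.edgeFinset) ^ 2 + Fintype.card V ^ 2 ≤
      2 * Fintype.card V * #G.edgeFinset + Fintype.card V ^ 3 := by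
  have hcauchy : (2 * #G.edgeFinset) ^ 2 ≤ Fintype.card V * ∑ v, G.degree v ^ 2 := by
    rw [← G.sum_degrees_eq_twice_card_edges]
    exact sq_sum_le_card_mul_sum_sq
  nlinarith [Nat.mul_le_mul_left (Fintype.card V) (sum_degree_sq_add_card_le hG)]

lemma card_edgeFinset_le_reimanBound
    (hG : Pairwise fun u w ↦ (G.commonNeighbors u w).Subsingleton) :
    (#G.edgeFinset : ℝ) ≤ reimanBound (Fintype.card V) := by
  have hsq : (2 * #G.edgeFinset : ℝ) ^ 2 + (Fintype.card V : ℝ) ^ 2 ≤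
      2 * Fintype.card V * #G.edgeFinset + (Fintype.card V : ℝ) ^ 3 :=
    mod_cast sq_two_mul_card_edgeFinset_add_sq_le hG
  rw [reimanBound]
  set m : ℝ := (Fintype.card V : ℝ)
  have hm0 : 0 ≤ m := Nat.cast_nonneg _
  have hroot : 4 * #G.edgeFinset - m ≤ m * √(4 * m - 3) := calc
    4 * #G.edgeFinset - m ≤ √(m ^ 2 * (4 * m - 3)) := Real.le_sqrt_of_sq_le (by linarith)
    _ = m * √(4 * m - 3) := by rw [Real.sqrt_mul (sq_nonneg m), Real.sqrt_sq hm0]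
  linarith

end Reiman

section EdgeSums

variable {V : Type*} [Fintype V] (G : SimpleGraph V) [DecidableRel G.Adj]

lemma sum_neighborFinset_comm {M : Type*} [AddCommMonoid M] (f : V → V → M) :
    ∑ u, ∑ v ∈ G.neighborFinset u, f u v = ∑ u, ∑ v ∈ G.neighborFinset u, f v u :=
  sum_comm' fun u v ↦ by simp [G.adj_comm u v]

lemma sum_sum_neighborFinset_one {R : Type*} [Semiring R] :
    ∑ u, ∑ _v ∈ G.neighborFinset u, (1 : R) = 2 * #G.edgeFinset := by
  simp only [sum_const, G.card_neighborFinset_eq_degree, nsmul_one]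
  rw [← Nat.cast_sum, G.sum_degrees_eq_twice_card_edges, Nat.cast_mul, Nat.cast_ofNat]

lemma two_mul_trace_mul_lapMatrix {R : Type*} [CommRing R] [DecidableEq V] (M : Matrix V V R) :
    2 * (M * G.lapMatrix R).trace =
      ∑ u, ∑ v ∈ G.neighborFinset u, (M u u + M v v - 2 * M u v) := by
  have hdiag (u : V) : (M * G.lapMatrix R) u u = ∑ v ∈ G.neighborFinset u, (M u u - M u v) := by
    simp [SimpleGraph.lapMatrix, mul_sub, SimpleGraph.degMatrix, mul_comm]
  have hswap := sum_neighborFinset_comm G fun u _ ↦ M u u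
  simp only [Matrix.trace, Matrix.diag, hdiag, sum_add_distrib, sum_sub_distrib, ← mul_sum]
    at hswap ⊢
  rw [← hswap]
  ring

/-- The sum over the ordered pairs `(u, v)` of adjacent vertices of `max 0 (x u + x v - 1)`. It is
convex in `x`, and at the indicator of `U` it counts every edge inside `U` twice. -/
noncomputable def edgeOverlap (x : V → ℝ) : ℝ :=
  ∑ u, ∑ v ∈ G.neighborFinset u, max 0 (x u + x v - 1)

lemma sum_card_neighborFinset_inter_eq [DecidableEq V] (U : Finset V) :
    ∑ u ∈ U, #(G.neighborFinset u ∩ U) = 2 * #(G.induce (U : Set V)).edgeFinset := by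
  have hdeg (u : (U : Set V)) : (G.induce (U : Set V)).degree u = #(G.neighborFinset u ∩ U) := by
    rw [← SimpleGraph.card_neighborFinset_eq_degree, ← card_map (.subtype (· ∈ (U : Set V)))]
    congr 1
    ext v
    simp
  rw [← SimpleGraph.sum_degrees_eq_twice_card_edges, ← sum_coe_sort]
  exact (sum_congr rfl fun u _ ↦ hdeg u).symm

lemma edgeOverlap_indicator (U : Finset V) :
    edgeOverlap G ((U : Set V).indicator 1) = 2 * #(G.induce (U : Set V)).edgeFinset := by
  classical
  have hterm (u v : V) : max 0 ((U : Set V).indicator 1 u + (U : Set V).indicator 1 v - 1) =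
      if u ∈ U then if v ∈ U then (1 : ℝ) else 0 else 0 := by
    by_cases hu : u ∈ U <;> by_cases hv : v ∈ U <;> simp [hu, hv]
  have hrow (u : V) :
      ∑ v ∈ G.neighborFinset u, (if u ∈ U then if v ∈ U then (1 : ℝ) else 0 else 0) =
        if u ∈ U then (#(G.neighborFinset u ∩ U) : ℝ) else 0 := by
    by_cases hu : u ∈ U <;> simp [hu]
  simp only [edgeOverlap, hterm, hrow, sum_ite_mem, univ_inter]
  exact_mod_cast sum_card_neighborFinset_inter_eq G U

lemma convexOn_sum {E ι : Type*} [AddCommGroup E] [Module ℝ E] {t : Set E} (ht : Convex ℝ t)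
    {s : Finset ι} {f : ι → E → ℝ} (hf : ∀ i ∈ s, ConvexOn ℝ t (f i)) :
    ConvexOn ℝ t fun x ↦ ∑ i ∈ s, f i x := by
  simpa only [sum_fn] using
    sum_induction f (ConvexOn ℝ t) (fun _ _ ↦ ConvexOn.add) (convexOn_const 0 ht) hf

lemma convexOn_edgeOverlap : ConvexOn ℝ Set.univ (edgeOverlap G) := by
  have hterm (u v : V) : ConvexOn ℝ Set.univ fun x : V → ℝ ↦ max 0 (x u + x v - 1) := by
    have hlin := ((LinearMap.proj u : (V → ℝ) →ₗ[ℝ] ℝ) + LinearMap.proj v).convexOn convex_univ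
    exact (convexOn_const 0 convex_univ).sup (hlin.sub (concaveOn_const 1 convex_univ))
  exact convexOn_sum convex_univ fun u _ ↦ convexOn_sum convex_univ fun v _ ↦ hterm u v

end EdgeSums

section EdgeExcess

/-- The charge per unit of `P u v ^ 2` to a vertex `u` with `P u u = p`. Since the off-diagonal
squares in row `u` sum to `p * (1 - p)`, the total charge to `u` is at most `max 0 (2 * p - 1)`. The
junk values at `p = 0` and `p = 1` are harmless, as there `P u v = 0` for all `v ≠ u`. -/
noncomputable def excessWeight (p : ℝ) : ℝ :=
  max 0 (2 * p - 1) / (p * (1 - p))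

lemma excessWeight_nonneg {p : ℝ} (h₀ : 0 ≤ p) (h₁ : p ≤ 1) : 0 ≤ excessWeight p :=
  div_nonneg (le_max_left _ _) (mul_nonneg h₀ (sub_nonneg.mpr h₁))

lemma excessWeight_mul_le {p s : ℝ} (h₀ : 0 ≤ p) (h₁ : p ≤ 1) (hs : s ≤ p * (1 - p)) :
    excessWeight p * s ≤ max 0 (2 * p - 1) := by
  rw [excessWeight, div_mul_eq_mul_div]
  exact div_le_of_le_mul₀ (mul_nonneg h₀ (sub_nonneg.mpr h₁)) (le_max_left _ _)
    (mul_le_mul_of_nonneg_left hs (le_max_left _ _))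

lemma add_sub_two_mul_sub_one_le {p q b : ℝ} (hp : 1 / 2 ≤ p) (hp₁ : p ≤ 1) (hq : 0 ≤ q)
    (hpq : b ^ 2 ≤ p * q) (hpp : b ^ 2 ≤ p * (1 - p)) :
    p + q - 2 * b - 1 ≤ 2 * q + excessWeight p * b ^ 2 := by
  rw [excessWeight, max_eq_right (by linarith)]
  rcases hp₁.eq_or_lt with rfl | hp₁
  · have hb : b = 0 := by nlinarith
    simpa [hb] using by linarith
  · have hp₀ : 0 < p := by linarith
    have hp₁' : 0 < 1 - p := sub_pos.mpr hp₁
    have hdiv : b ^ 2 / p ≤ q := (div_le_iff₀' hp₀).mpr hpq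
    have hsplit : (2 * p - 1) / (p * (1 - p)) * b ^ 2 =
        (b + (1 - p)) ^ 2 / (1 - p) - 2 * b - (1 - p) - b ^ 2 / p := by
      field_simp
      ring
    have hsq : 0 ≤ (b + (1 - p)) ^ 2 / (1 - p) := div_nonneg (sq_nonneg _) hp₁'.le
    linarith

variable {V : Type*} [Fintype V] {P : Matrix V V ℝ}

lemma diag_add_diag_sub_two_mul_sub_one_le (hP : IsStarProjection P) {u v : V} (huv : u ≠ v) :
    P u u + P v v - 2 * P u v - 1 ≤
      max 0 (min 1 (2 * P u u) + min 1 (2 * P v v) - 1) +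
        (excessWeight (P u u) * P u v ^ 2 + excessWeight (P v v) * P u v ^ 2) := by
  have hoff {w w' : V} (h : w ≠ w') : P w w' ^ 2 ≤ P w w * (1 - P w w) := by
    simpa using sum_apply_sq_le_of_notMem hP (notMem_singleton.mpr h)
  have hu₀ := diag_nonneg_of_isStarProjection hP u
  have hv₀ := diag_nonneg_of_isStarProjection hP v
  have hu₁ := diag_le_one_of_isStarProjection hP u
  have hv₁ := diag_le_one_of_isStarProjection hP v
  have hsymm := apply_comm_of_isStarProjection hP u v
  have hwu : 0 ≤ excessWeight (P u u) * P u v ^ 2 :=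
    mul_nonneg (excessWeight_nonneg hu₀ hu₁) (sq_nonneg _)
  have hwv : 0 ≤ excessWeight (P v v) * P u v ^ 2 :=
    mul_nonneg (excessWeight_nonneg hv₀ hv₁) (sq_nonneg _)
  have hcauchy := apply_sq_le_of_isStarProjection hP u v
  refine le_trans ?_ (add_le_add_left (le_max_right _ _) _)
  rcases le_total (1 / 2) (P u u) with hu | hu <;> rcases le_total (1 / 2) (P v v) with hv | hv
  · rw [min_eq_left (by linarith), min_eq_left (by linarith)]
    linarith [diag_add_diag_sub_two_mul_le_two hP huv]
  · rw [min_eq_left (by linarith), min_eq_right (by linarith)]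
    linarith [add_sub_two_mul_sub_one_le hu hu₁ hv₀ hcauchy (hoff huv)]
  · rw [min_eq_right (by linarith), min_eq_left (by linarith)]
    rw [mul_comm] at hcauchy
    linarith [add_sub_two_mul_sub_one_le hv hv₁ hu₀ hcauchy (hsymm ▸ hoff huv.symm)]
  · rw [min_eq_right (by linarith), min_eq_right (by linarith)]
    linarith [two_mul_abs_apply_le_of_isStarProjection hP u v, neg_abs_le (P u v)]

lemma sum_diag_add_diag_sub_two_mul_sub_one_le (hP : IsStarProjection P)
    (G : SimpleGraph V) [DecidableRel G.Adj] :
    ∑ u, ∑ v ∈ G.neighborFinset u, (P u u + P v v - 2 * P u v - 1) ≤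
      edgeOverlap G (fun u ↦ min 1 (2 * P u u)) + 2 * ∑ u, max 0 (2 * P u u - 1) := by
  have hrow (u : V) :
      ∑ v ∈ G.neighborFinset u, excessWeight (P u u) * P u v ^ 2 ≤ max 0 (2 * P u u - 1) := by
    rw [← mul_sum]
    exact excessWeight_mul_le (diag_nonneg_of_isStarProjection hP u)
      (diag_le_one_of_isStarProjection hP u)
      (sum_apply_sq_le_of_notMem hP (G.notMem_neighborFinset_self u))
  have hcol : ∑ u, ∑ v ∈ G.neighborFinset u, excessWeight (P v v) * P u v ^ 2 =
      ∑ u, ∑ v ∈ G.neighborFinset u, excessWeight (P u u) * P u v ^ 2 := by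
    rw [sum_neighborFinset_comm]
    simp only [apply_comm_of_isStarProjection hP]
  calc ∑ u, ∑ v ∈ G.neighborFinset u, (P u u + P v v - 2 * P u v - 1)
      ≤ ∑ u, ∑ v ∈ G.neighborFinset u, (max 0 (min 1 (2 * P u u) + min 1 (2 * P v v) - 1) +
          (excessWeight (P u u) * P u v ^ 2 + excessWeight (P v v) * P u v ^ 2)) := by
        gcongr with u _ v hv
        exact diag_add_diag_sub_two_mul_sub_one_le hP ((G.mem_neighborFinset u v).mp hv).ne
    _ = edgeOverlap G (fun u ↦ min 1 (2 * P u u)) +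
          2 * ∑ u, ∑ v ∈ G.neighborFinset u, excessWeight (P u u) * P u v ^ 2 := by
        simp only [sum_add_distrib, hcol, edgeOverlap, two_mul]
    _ ≤ edgeOverlap G (fun u ↦ min 1 (2 * P u u)) + 2 * ∑ u, max 0 (2 * P u u - 1) := by
        gcongr with u
        exact hrow u

end EdgeExcess

section TraceBound

variable {V : Type*} [Fintype V] {P : Matrix V V ℝ} {k : ℕ}

lemma min_one_two_mul_diag_mem_cubeSlab (hP : IsStarProjection P) (hk : P.trace = k) :
    (fun u ↦ min 1 (2 * P u u)) ∈ cubeSlab V k (2 * k) := by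
  have h₀ := diag_nonneg_of_isStarProjection hP
  have h₁ := diag_le_one_of_isStarProjection hP
  have hsum : ∑ u, P u u = k := hk
  refine mem_cubeSlab.mpr
    ⟨fun u ↦ ⟨le_min zero_le_one (by linarith [h₀ u]), min_le_left _ _⟩, ?_, ?_⟩
  · rw [← hsum]
    gcongr with u
    exact le_min (h₁ u) (by linarith [h₀ u])
  · push_cast
    rw [← hsum, mul_sum]
    gcongr
    exact min_le_right _ _

variable [DecidableEq V] (G : SimpleGraph V) [DecidableRel G.Adj]

lemma two_mul_trace_mul_lapMatrix_le (hP : IsStarProjection P) :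
    2 * (P * G.lapMatrix ℝ).trace ≤ 2 * #G.edgeFinset + 4 * P.trace +
      (edgeOverlap G (fun u ↦ min 1 (2 * P u u)) - 2 * ∑ u, min 1 (2 * P u u)) := by
  have hexcess : ∑ u, ∑ v ∈ G.neighborFinset u, (P u u + P v v - 2 * P u v - 1) =
      2 * (P * G.lapMatrix ℝ).trace - 2 * #G.edgeFinset := by
    simp only [two_mul_trace_mul_lapMatrix, ← sum_sum_neighborFinset_one, ← sum_sub_distrib]
  have hheavy : ∑ u, max 0 (2 * P u u - 1) = 2 * P.trace - ∑ u, min 1 (2 * P u u) := by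
    rw [Matrix.trace, mul_sum, ← sum_sub_distrib]
    refine sum_congr rfl fun u _ ↦ ?_
    rw [Matrix.diag_apply, ← max_sub_sub_left, sub_self, max_comm]
  have hle := sum_diag_add_diag_sub_two_mul_sub_one_le hP G
  rw [hexcess, hheavy] at hle
  linarith

theorem exists_finset_trace_mul_lapMatrix_add_card_le (hP : IsStarProjection P)
    (hk : P.trace = k) :
    ∃ U : Finset V, #U ∈ Set.Icc k (2 * k) ∧ (P * G.lapMatrix ℝ).trace + #U ≤
      #G.edgeFinset + #(G.induce (U : Set V)).edgeFinset + 2 * k := by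
  have hconvex : ConvexOn ℝ Set.univ fun x ↦ edgeOverlap G x - 2 * ∑ u, x u :=
    (convexOn_edgeOverlap G).sub <|
      (isLinearMap_sum_apply.mk'.concaveOn convex_univ).smul zero_le_two
  obtain ⟨U, hU, hle⟩ :=
    exists_finset_le_apply_indicator hconvex (min_one_two_mul_diag_mem_cubeSlab hP hk)
  have hcard : ∑ u, (U : Set V).indicator (1 : V → ℝ) u = #U := by simp [Set.indicator_apply]
  rw [edgeOverlap_indicator, hcard] at hle
  have htrace := two_mul_trace_mul_lapMatrix_le G hP
  rw [hk] at htrace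
  exact ⟨U, hU, by linarith⟩

variable {G}

theorem trace_mul_lapMatrix_le_of_squareFree (hP : IsStarProjection P) (hk : P.trace = k)
    (hk₁ : 1 ≤ k) (hG : ∀ (v : V) (c : G.Walk v v), c.IsCycle → c.length ≠ 4) :
    (P * G.lapMatrix ℝ).trace ≤
      #G.edgeFinset + (⌊(k : ℝ) * (1 + √(8 * (k : ℝ) - 3)) / 2⌋ : ℝ) := by
  obtain ⟨U, ⟨hkU, hUk⟩, htrace⟩ := exists_finset_trace_mul_lapMatrix_add_card_le G hP hk
  have hreiman : (#(G.induce (U : Set V)).edgeFinset : ℝ) ≤ reimanBound #U := by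
    simpa using card_edgeFinset_le_reimanBound <| pairwise_subsingleton_commonNeighbors_induce
      (pairwise_subsingleton_commonNeighbors_of_squareFree hG) (U : Set V)
  have hU₁ : (1 : ℝ) ≤ #U := mod_cast hk₁.trans hkU
  have hUk' : (#U : ℝ) ≤ 2 * k := mod_cast hUk
  have hmono : reimanBound #U - #U ≤ reimanBound (2 * k) - 2 * k :=
    monotoneOn_reimanBound_sub_self (Set.mem_Ici.mpr (by linarith)) (Set.mem_Ici.mpr (by linarith))
      hUk'
  have hbound : reimanBound (2 * k) = k * (1 + √(8 * k - 3)) / 2 := by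
    rw [reimanBound]
    ring_nf
  have hfloor : (#(G.induce (U : Set V)).edgeFinset : ℤ) + 2 * k - #U ≤
      ⌊(k : ℝ) * (1 + √(8 * (k : ℝ) - 3)) / 2⌋ := by
    rw [Int.le_floor, ← hbound]
    push_cast
    linarith
  have hfloor' : (#(G.induce (U : Set V)).edgeFinset : ℝ) + 2 * k - #U ≤
      (⌊(k : ℝ) * (1 + √(8 * (k : ℝ) - 3)) / 2⌋ : ℝ) := mod_cast hfloor
  linarith

end TraceBound

lemma exists_finset_sum_ithLargest_eq {n k : ℕ} (f : Fin n → ℝ) (hk : k ≤ n) :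
    ∃ S : Finset (Fin n), #S = k ∧ ∑ i ∈ Icc 1 k, ithLargest f i = ∑ j ∈ S, f j := by
  let φ : Fin k ↪ Fin n :=
    (Fin.castLEEmb hk).trans (Fin.revPerm.trans (Tuple.sort f)).toEmbedding
  refine ⟨univ.map φ, by simp, ?_⟩
  rw [sum_map, ← Ico_add_one_right_eq_Icc, sum_Ico_eq_sum_range, sum_range]
  refine sum_congr rfl fun i _ ↦ ?_
  have hi : 1 ≤ 1 + (i : ℕ) ∧ 1 + (i : ℕ) ≤ n := by omega
  rw [ithLargest, dif_pos hi]
  simp [φ, Fin.castLE]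

theorem sum_lapEigs_le_of_squareFree_general {V : Type*} [Fintype V] [DecidableEq V]
    (G : SimpleGraph V) [DecidableRel G.Adj]
    (hG : ∀ (v : V) (c : G.Walk v v), c.IsCycle → c.length ≠ 4) {S : Finset V}
    (hS : S.Nonempty) :
    ∑ j ∈ S, (SimpleGraph.posSemidef_lapMatrix ℝ G).isHermitian.eigenvalues j ≤
      #G.edgeFinset + (⌊(#S : ℝ) * (1 + √(8 * (#S : ℝ) - 3)) / 2⌋ : ℝ) := by
  have hL := (SimpleGraph.posSemidef_lapMatrix ℝ G).isHermitian
  simpa only [trace_eigenProjection_mul, RCLike.ofReal_real_eq_id, id_eq] using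
    trace_mul_lapMatrix_le_of_squareFree (isStarProjection_eigenProjection hL S)
      (trace_eigenProjection hL S) hS.card_pos hG

/-- for `k ≥ 1` and a square-free graph `G` (no cycle of length 4) with at
least `k` vertices, `∑_{i=1}^k λ_i(L(G)) ≤ |E| + ⌊k(1 + √(8k − 3))/2⌋`. -/
theorem sum_lapEigs_le_of_squareFree {n : ℕ} (G : SimpleGraph (Fin n)) [DecidableRel G.Adj]
    (hG : ∀ (v : Fin n) (c : G.Walk v v), c.IsCycle → c.length ≠ 4)
    (k : ℕ) (hk1 : 1 ≤ k) (hk2 : k ≤ n) :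
    ∑ i ∈ Finset.Icc 1 k, ithLargest (lapEigs G) i ≤
      (G.edgeFinset.card : ℝ) +
        (⌊(k : ℝ) * (1 + Real.sqrt (8 * (k : ℝ) - 3)) / 2⌋ : ℝ) := by
  obtain ⟨S, rfl, hsum⟩ := exists_finset_sum_ithLargest_eq (lapEigs G) hk2
  exact hsum.trans_le (sum_lapEigs_le_of_squareFree_general G hG (card_pos.mp hk1))
end

section
/- For every integer k_0 ≥ 1 and every real ε > 0, there exists n_0 = n_0(k_0, ε) such that for all n ≥ n_0 and all integers k with 1 ≤ k ≤ k_0, the path graph P_n on n vertices satisfies ∑_{i=1}^{2k} d_i(P_n) − ∑_{i=1}^{k} λ_i(L(P_n)) < ε. -/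
open Finset

/-- Adjacency in the path graph is decidable. -/
instance pathGraphAdjDecidable (n : ℕ) : DecidableRel (SimpleGraph.pathGraph n).Adj :=
  fun u v => decidable_of_iff ((u : ℕ) + 1 = v ∨ (v : ℕ) + 1 = u)
    SimpleGraph.pathGraph_adj.symm

/-!
Every vertex of `P_n` has degree at most `2`, so the degree sum is at most `4k`. On the other side,
a function `g` on `ℤ` with `g (-1) = g 0` and `g n = g (n - 1)` restricts to `P_n` in such a way
that the Laplacian acts as the second difference `2 g(v) - g(v - 1) - g(v + 1)`. The functions
`g(v) = cos (θ (v + 1/2))` with `θ = π m / n` are therefore eigenvectors, with eigenvalue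
`2 - 2 cos θ`. Taking `m = n - i` gives `λ_i ≥ 2 + 2 cos (π i / n) ≥ 4 - (π i / n)²`, and the
difference of the two sums is at most `k (π k / n)²`, which tends to `0` as `n → ∞`.
-/

section IthLargest

variable {n : ℕ} {f : Fin n → ℝ}

lemma ithLargest_le {c : ℝ} (hc : 0 ≤ c) (hf : ∀ x, f x ≤ c) (i : ℕ) : ithLargest f i ≤ c := by
  unfold ithLargest
  split_ifs
  exacts [hf _, hc]

lemma le_ithLargest_of_le_card {c : ℝ} {i : ℕ} (hi : 1 ≤ i) (hcard : i ≤ #{x | c ≤ f x}) :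
    c ≤ ithLargest f i := by
  have hin : i ≤ n := hcard.trans <| (card_le_univ _).trans_eq (Fintype.card_fin n)
  have hanti : Antitone fun j : Fin n ↦ f (Tuple.sort f j.rev) :=
    fun _ _ hab ↦ Tuple.monotone_sort f (Fin.rev_le_rev.mpr hab)
  have hperm : #{j : Fin n | c ≤ f (Tuple.sort f j.rev)} = #{x | c ≤ f x} :=
    card_equiv (Fin.revPerm.trans (Tuple.sort f)) (by simp)
  rw [ithLargest, dif_pos ⟨hi, hin⟩]
  refine (Tuple.lt_card_ge_iff_apply_ge_of_antitone hanti).mp ?_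
  rw [hperm]
  exact (Nat.sub_one_lt_of_le hi le_rfl).trans_le hcard

lemma le_ithLargest_of_strictAntiOn {μ : ℕ → ℝ} {i : ℕ} (hi : 1 ≤ i)
    (hμ : StrictAntiOn μ (Set.Icc 1 i)) (hmem : ∀ m ∈ Set.Icc 1 i, μ m ∈ Set.range f) :
    μ i ≤ ithLargest f i := by
  refine le_ithLargest_of_le_card hi ?_
  have hsurj : Set.SurjOn f ↑({x | μ i ≤ f x} : Finset (Fin n)) ↑((Icc 1 i).image μ) := by
    intro y hy
    obtain ⟨m, hm, rfl⟩ := mem_image.mp hy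
    have hm' : m ∈ Set.Icc 1 i := mem_Icc.mp hm
    obtain ⟨x, hx⟩ := hmem m hm'
    have hle : μ i ≤ μ m := hμ.antitoneOn hm' ⟨hi, le_rfl⟩ hm'.2
    exact ⟨x, by simpa [hx] using hle, hx⟩
  calc i = #((Icc 1 i).image μ) := by
        rw [card_image_of_injOn (by simpa only [coe_Icc] using hμ.injOn), Nat.card_Icc,
          Nat.add_sub_cancel]
    _ ≤ #{x | μ i ≤ f x} := card_le_card_of_surjOn f hsurj

end IthLargest

section Laplacian

open Matrix

lemma lapMatrix_mulVec_apply_eq_sum_sub {V R : Type*} [Fintype V] [DecidableEq V] [NonAssocRing R]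
    (G : SimpleGraph V) [DecidableRel G.Adj] (x : V → R) (v : V) :
    (G.lapMatrix R *ᵥ x) v = ∑ u ∈ G.neighborFinset v, (x v - x u) := by
  rw [SimpleGraph.lapMatrix_mulVec_apply, sum_sub_distrib, sum_const,
    SimpleGraph.card_neighborFinset_eq_degree, nsmul_eq_mul]

lemma mem_range_lapEigs_of_mulVec_eq_smul {n : ℕ} {G : SimpleGraph (Fin n)} [DecidableRel G.Adj]
    {x : Fin n → ℝ} {μ : ℝ} (hx : x ≠ 0) (h : G.lapMatrix ℝ *ᵥ x = μ • x) :
    μ ∈ Set.range (lapEigs G) := by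
  have heig : Module.End.HasEigenvalue (toLin' (G.lapMatrix ℝ)) μ :=
    Module.End.hasEigenvalue_of_hasEigenvector ⟨Module.End.mem_eigenspace_iff.mpr h, hx⟩
  rw [Module.End.hasEigenvalue_iff_mem_spectrum, spectrum_toLin'] at heig
  rwa [lapEigs, ← IsHermitian.spectrum_real_eq_range_eigenvalues]

end Laplacian

section PathGraph

open Matrix SimpleGraph

variable {n : ℕ}

lemma intCast_finVal_injective : Function.Injective fun u : Fin n ↦ ((u : ℕ) : ℤ) :=
  Nat.cast_injective.comp Fin.val_injective

lemma image_intCast_neighborFinset_pathGraph (v : Fin n) :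
    ((pathGraph n).neighborFinset v).image (fun u : Fin n ↦ ((u : ℕ) : ℤ)) =
      {j ∈ ({(v : ℤ) - 1, (v : ℤ) + 1} : Finset ℤ) | 0 ≤ j ∧ j < (n : ℤ)} := by
  ext j
  simp only [mem_image, mem_neighborFinset, pathGraph_adj, mem_filter, mem_insert, mem_singleton]
  constructor
  · rintro ⟨u, hu, rfl⟩
    have := u.isLt
    omega
  · rintro ⟨hj, hj0, hjn⟩
    exact ⟨⟨j.toNat, by omega⟩, by simp only; omega, by simp only; omega⟩

lemma degree_pathGraph_le_two (v : Fin n) : (pathGraph n).degree v ≤ 2 := by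
  rw [← card_neighborFinset_eq_degree, ← card_image_of_injective _ intCast_finVal_injective,
    image_intCast_neighborFinset_pathGraph]
  exact (card_filter_le _ _).trans card_le_two

lemma lapMatrix_pathGraph_mulVec_apply {R : Type*} [NonAssocRing R] {g : ℤ → R}
    (hleft : g (-1) = g 0) (hright : g n = g (n - 1)) (v : Fin n) :
    ((pathGraph n).lapMatrix R *ᵥ fun u ↦ g (u : ℕ)) v =
      (g v - g (v - 1)) + (g v - g (v + 1)) := by
  have hinside : ∀ j ∈ ({(v : ℤ) - 1, (v : ℤ) + 1} : Finset ℤ), g v - g j ≠ 0 → 0 ≤ j ∧ j < n := by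
    intro j hj
    contrapose!
    intro hout
    have hv := v.isLt
    obtain rfl | rfl : j = v - 1 ∨ j = v + 1 := by simpa using hj
    · have hv0 : (v : ℤ) = 0 := by omega
      simp [hv0, hleft]
    · have hvn : (v : ℤ) = n - 1 := by omega
      simp [hvn, hright]
  calc ((pathGraph n).lapMatrix R *ᵥ fun u ↦ g (u : ℕ)) v
      = ∑ u ∈ (pathGraph n).neighborFinset v, (g v - g (u : ℕ)) :=
        lapMatrix_mulVec_apply_eq_sum_sub ..
    _ = ∑ j ∈ ((pathGraph n).neighborFinset v).image (fun u : Fin n ↦ ((u : ℕ) : ℤ)), (g v - g j) :=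
        (sum_image (f := fun j ↦ g v - g j) intCast_finVal_injective.injOn).symm
    _ = ∑ j ∈ ({(v : ℤ) - 1, (v : ℤ) + 1} : Finset ℤ), (g v - g j) := by
        rw [image_intCast_neighborFinset_pathGraph, sum_filter_of_ne hinside]
    _ = (g v - g (v - 1)) + (g v - g (v + 1)) := sum_pair (by omega)

lemma lapMatrix_pathGraph_mulVec_cos {θ : ℝ} (hθ : Real.sin (n * θ) = 0) :
    ((pathGraph n).lapMatrix ℝ *ᵥ fun u ↦ Real.cos (θ * ((u : ℕ) + 1 / 2))) =
      (2 - 2 * Real.cos θ) • fun u : Fin n ↦ Real.cos (θ * ((u : ℕ) + 1 / 2)) := by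
  let g : ℤ → ℝ := fun j ↦ Real.cos (θ * (j + 1 / 2))
  have hleft : g (-1) = g 0 := by
    simp only [g]
    rw [← Real.cos_neg]
    push_cast
    ring_nf
  have hright : g n = g (n - 1) := by
    have hn : θ * ((n : ℤ) + 1 / 2) = n * θ + θ / 2 := by push_cast; ring
    have hn' : θ * (((n : ℤ) - 1 : ℤ) + 1 / 2) = n * θ - θ / 2 := by push_cast; ring
    simp only [g, hn, hn', Real.cos_add, Real.cos_sub, hθ, zero_mul, sub_zero, add_zero]
  have hsecond (j : ℤ) : (g j - g (j - 1)) + (g j - g (j + 1)) = (2 - 2 * Real.cos θ) * g j := by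
    have hpred : θ * ((j - 1 : ℤ) + 1 / 2) = θ * (j + 1 / 2) - θ := by push_cast; ring
    have hsucc : θ * ((j + 1 : ℤ) + 1 / 2) = θ * (j + 1 / 2) + θ := by push_cast; ring
    simp only [g, hpred, hsucc, Real.cos_sub, Real.cos_add]
    ring
  ext v
  simpa [g] using (lapMatrix_pathGraph_mulVec_apply hleft hright v).trans (hsecond v)

lemma two_sub_two_mul_cos_mem_range_lapEigs_pathGraph {m : ℕ} (hm : m < n) :
    2 - 2 * Real.cos (Real.pi * m / n) ∈ Set.range (lapEigs (pathGraph n)) := by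
  have hn : (0 : ℝ) < n := by exact_mod_cast m.zero_le.trans_lt hm
  have hsin : Real.sin (n * (Real.pi * m / n)) = 0 := by
    rw [mul_div_cancel₀ _ hn.ne', mul_comm, Real.sin_nat_mul_pi]
  refine mem_range_lapEigs_of_mulVec_eq_smul (fun hzero ↦ ?_) (lapMatrix_pathGraph_mulVec_cos hsin)
  have hlt : Real.pi * m / n < Real.pi := by
    rw [div_lt_iff₀ hn]
    gcongr
  have hnonneg : 0 ≤ Real.pi * m / n := by positivity
  have hpos : 0 < Real.cos (Real.pi * m / n * ((0 : ℕ) + 1 / 2)) :=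
    Real.cos_pos_of_mem_Ioo ⟨by push_cast; linarith [Real.pi_pos], by push_cast; linarith⟩
  exact hpos.ne' (congrFun hzero ⟨0, m.zero_le.trans_lt hm⟩)

lemma two_add_two_mul_cos_mem_range_lapEigs_pathGraph {i : ℕ} (hi : 1 ≤ i) (hin : i ≤ n) :
    2 + 2 * Real.cos (Real.pi * i / n) ∈ Set.range (lapEigs (pathGraph n)) := by
  have hn : (n : ℝ) ≠ 0 := by exact_mod_cast Nat.ne_of_gt (hi.trans hin)
  have hangle : Real.pi * (n - i : ℕ) / n = Real.pi - Real.pi * i / n := by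
    rw [Nat.cast_sub hin]
    field_simp
  have hmem := two_sub_two_mul_cos_mem_range_lapEigs_pathGraph (n := n) (m := n - i) (by omega)
  rwa [hangle, Real.cos_pi_sub, mul_neg, sub_neg_eq_add] at hmem

lemma strictAntiOn_two_add_two_mul_cos_pi_mul_div :
    StrictAntiOn (fun m : ℕ ↦ 2 + 2 * Real.cos (Real.pi * m / n)) (Set.Icc 0 n) := by
  intro a _ b hb hab
  have hn : (0 : ℝ) < n := by exact_mod_cast (a.zero_le.trans_lt hab).trans_le hb.2
  have hbπ : Real.pi * b / n ≤ Real.pi := by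
    rw [div_le_iff₀ hn]
    gcongr
    exact hb.2
  have hcos : Real.cos (Real.pi * b / n) < Real.cos (Real.pi * a / n) :=
    Real.cos_lt_cos_of_nonneg_of_le_pi (by positivity) hbπ (by gcongr)
  simpa using hcos

lemma two_add_two_mul_cos_le_ithLargest_lapEigs_pathGraph {i : ℕ} (hi : 1 ≤ i) (hin : i ≤ n) :
    2 + 2 * Real.cos (Real.pi * i / n) ≤ ithLargest (lapEigs (pathGraph n)) i :=
  le_ithLargest_of_strictAntiOn hi
    (strictAntiOn_two_add_two_mul_cos_pi_mul_div.mono (Set.Icc_subset_Icc zero_le_one hin))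
    fun _ hm ↦ two_add_two_mul_cos_mem_range_lapEigs_pathGraph hm.1 (hm.2.trans hin)

lemma sum_ithLargest_degTuple_pathGraph_le_two_mul (n k : ℕ) :
    ∑ i ∈ Icc 1 k, ithLargest (degTuple (pathGraph n)) i ≤ 2 * k := by
  have hdeg (v : Fin n) : degTuple (pathGraph n) v ≤ 2 :=
    Nat.cast_le_ofNat.mpr (degree_pathGraph_le_two v)
  calc ∑ i ∈ Icc 1 k, ithLargest (degTuple (pathGraph n)) i
      ≤ ∑ _i ∈ Icc 1 k, (2 : ℝ) := sum_le_sum fun i _ ↦ ithLargest_le zero_le_two hdeg i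
    _ = 2 * k := by simp [mul_comm]

lemma four_mul_sub_le_sum_ithLargest_lapEigs_pathGraph {k : ℕ} (hk : k ≤ n) :
    4 * k - k * (Real.pi * k / n) ^ 2 ≤ ∑ i ∈ Icc 1 k, ithLargest (lapEigs (pathGraph n)) i := by
  have hterm (i : ℕ) (hi : i ∈ Icc 1 k) :
      4 - (Real.pi * k / n) ^ 2 ≤ ithLargest (lapEigs (pathGraph n)) i := by
    obtain ⟨hi1, hik⟩ := mem_Icc.mp hi
    have hcos : 1 - (Real.pi * i / n) ^ 2 / 2 ≤ Real.cos (Real.pi * i / n) :=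
      Real.one_sub_sq_div_two_le_cos
    have hsq : (Real.pi * i / n) ^ 2 ≤ (Real.pi * k / n) ^ 2 := by gcongr
    linarith [two_add_two_mul_cos_le_ithLargest_lapEigs_pathGraph hi1 (hik.trans hk)]
  calc 4 * k - k * (Real.pi * k / n) ^ 2
      = ∑ _i ∈ Icc 1 k, (4 - (Real.pi * k / n) ^ 2) := by
        rw [sum_const, Nat.card_Icc, Nat.add_sub_cancel, nsmul_eq_mul]
        ring
    _ ≤ ∑ i ∈ Icc 1 k, ithLargest (lapEigs (pathGraph n)) i := sum_le_sum hterm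

lemma pathGraph_sum_degrees_sub_sum_lapEigs_le {k : ℕ} (hk : k ≤ n) :
    ∑ i ∈ Icc 1 (2 * k), ithLargest (degTuple (pathGraph n)) i -
      ∑ i ∈ Icc 1 k, ithLargest (lapEigs (pathGraph n)) i ≤ k * (Real.pi * k / n) ^ 2 := by
  have hdeg := sum_ithLargest_degTuple_pathGraph_le_two_mul n (2 * k)
  have heig := four_mul_sub_le_sum_ithLargest_lapEigs_pathGraph hk
  push_cast at hdeg
  linarith

end PathGraph

lemma tendsto_const_mul_const_div_sq_atTop_nhds_zero_nat (a b : ℝ) :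
    Filter.Tendsto (fun n : ℕ ↦ a * (b / n) ^ 2) Filter.atTop (nhds 0) := by
  simpa using ((tendsto_const_div_atTop_nhds_zero_nat b).pow 2).const_mul a

/-- for every `k₀ ≥ 1` and `ε > 0` there is `n₀` such that for all `n ≥ n₀`
and all `1 ≤ k ≤ k₀`, the path graph `P_n` satisfies
`∑_{i=1}^{2k} d_i(P_n) − ∑_{i=1}^k λ_i(L(P_n)) < ε`. -/
theorem pathGraph_sum_degrees_sub_sum_lapEigs_lt (k₀ : ℕ) (hk₀ : 1 ≤ k₀) (ε : ℝ)
    (hε : 0 < ε) :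
    ∃ n₀ : ℕ, ∀ n : ℕ, n₀ ≤ n → ∀ k : ℕ, 1 ≤ k → k ≤ k₀ →
      (∑ i ∈ Finset.Icc 1 (2 * k), ithLargest (degTuple (SimpleGraph.pathGraph n)) i) -
        (∑ i ∈ Finset.Icc 1 k, ithLargest (lapEigs (SimpleGraph.pathGraph n)) i) < ε := by
  have hlim := tendsto_const_mul_const_div_sq_atTop_nhds_zero_nat k₀ (Real.pi * k₀)
  obtain ⟨n₀, hn₀⟩ := Filter.eventually_atTop.mp
    ((hlim.eventually_lt_const hε).and (Filter.eventually_ge_atTop k₀))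
  refine ⟨n₀, fun n hn k _ hk ↦ ?_⟩
  obtain ⟨hsmall, hk₀n⟩ := hn₀ n hn
  calc _ ≤ k * (Real.pi * k / n) ^ 2 := pathGraph_sum_degrees_sub_sum_lapEigs_le (hk.trans hk₀n)
    _ ≤ k₀ * (Real.pi * k₀ / n) ^ 2 := by gcongr
    _ < ε := hsmall
end

section
/- Let G = (V,E) be a finite simple graph with |V| = n, and let k be an integer with 1 ≤ k ≤ n/2. Then the sum of the k largest eigenvalues of the signless Laplacian matrix of G is at most the sum of the 2k largest vertex degrees of G: ∑_{i=1}^{k} λ_i(Q(G)) ≤ ∑_{i=1}^{2k} d_i(G). -/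
open Finset

/-- The signless Laplacian matrix `Q(G) = D + A` of a finite simple graph. -/
noncomputable def signlessLap {n : ℕ} (G : SimpleGraph (Fin n)) [DecidableRel G.Adj] :
    Matrix (Fin n) (Fin n) ℝ :=
  G.degMatrix ℝ + G.adjMatrix ℝ

theorem isHermitian_signlessLap {n : ℕ} (G : SimpleGraph (Fin n)) [DecidableRel G.Adj] :
    (signlessLap G).IsHermitian := by
  rw [Matrix.IsHermitian, Matrix.conjTranspose_eq_transpose_of_trivial]
  exact (SimpleGraph.isSymm_degMatrix ℝ G).add (SimpleGraph.isSymm_adjMatrix G)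

/-- The eigenvalues of the signless Laplacian matrix of `G`
(as a tuple indexed by the vertices, with multiplicity). -/
noncomputable def signlessLapEigs {n : ℕ} (G : SimpleGraph (Fin n)) [DecidableRel G.Adj] :
    Fin n → ℝ :=
  (isHermitian_signlessLap G).eigenvalues

/-!
Let `b₁, …, bₖ` be orthonormal eigenvectors for the `k` largest eigenvalues and let `p v ∈ ℝᵏ` be
the vector of their values at the vertex `v`. Then the sum of these eigenvalues is the sum of
`‖p u + p v‖ ^ 2` over the edges `uv`, while `∑ v, 2 * ‖p v‖ ^ 2 = 2 * k`. Hence it suffices to find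
weights `w v ∈ [0, 1]` of total mass at most `2 * k` with `‖p u + p v‖ ^ 2 ≤ w u + w v` for `u ≠ v`:
the eigenvalue sum is then at most `∑ v, deg v * w v`, which is at most the sum of the `2 * k`
largest degrees.

By the parallelogram law `2 * ‖p v‖ ^ 2` is such a weight, except that it may exceed `1`. Capping it
at `1` on the heavy vertices `h` frees the mass `2 * ‖p h‖ ^ 2 - 1`, and the star inequality says
that this pays for the deficit `‖p h + p u‖ ^ 2 - 1 - 2 * ‖p u‖ ^ 2` created at all the other
vertices `u` together.
-/

section TopEntries

theorem sum_mul_le_sum_of_threshold {ι : Type*} [Fintype ι] {f w : ι → ℝ} {T : Finset ι} {c : ℝ}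
    (hc : 0 ≤ c) (hT : ∀ v ∈ T, c ≤ f v) (hTc : ∀ v ∉ T, f v ≤ c) (hw₀ : ∀ v, 0 ≤ w v)
    (hw₁ : ∀ v, w v ≤ 1) (hw : ∑ v, w v ≤ #T) :
    ∑ v, f v * w v ≤ ∑ v ∈ T, f v := by
  classical
  have pointwise (v : ι) : (f v - c) * w v ≤ if v ∈ T then f v - c else 0 := by
    split_ifs with hv
    · exact mul_le_of_le_one_right (sub_nonneg.2 (hT v hv)) (hw₁ v)
    · exact mul_nonpos_of_nonpos_of_nonneg (sub_nonpos.2 (hTc v hv)) (hw₀ v)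
  calc ∑ v, f v * w v = ∑ v, (f v - c) * w v + c * ∑ v, w v := by
        rw [mul_sum, ← sum_add_distrib]
        exact sum_congr rfl fun v _ => by ring
    _ ≤ (∑ v, if v ∈ T then f v - c else 0) + c * #T := by
        gcongr with v
        exact pointwise v
    _ = ∑ v ∈ T, f v := by
        rw [sum_ite_mem, univ_inter, sum_sub_distrib, sum_const, nsmul_eq_mul]
        ring

variable {n k : ℕ} (f : Fin n → ℝ)

/-- The positions of the `k` largest entries of `f`, ties being broken by `Tuple.sort`. -/
noncomputable def topIndices (hk : k ≤ n) : Finset (Fin n) :=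
  univ.map ((Fin.castLEEmb hk).trans (Fin.revPerm.trans (Tuple.sort f)).toEmbedding)

theorem card_topIndices (hk : k ≤ n) : #(topIndices f hk) = k := by
  simp [topIndices]

theorem mem_topIndices {f : Fin n → ℝ} {hk : k ≤ n} {v : Fin n} :
    v ∈ topIndices f hk ↔ ∃ j : Fin k, Tuple.sort f (j.castLE hk).rev = v := by
  simp [topIndices]

theorem ithLargest_succ (j : Fin n) : ithLargest f (j + 1) = f (Tuple.sort f j.rev) := by
  simp [ithLargest]

theorem sum_ithLargest_eq_sum_topIndices (hk : k ≤ n) :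
    ∑ i ∈ Icc 1 k, ithLargest f i = ∑ v ∈ topIndices f hk, f v :=
  calc ∑ i ∈ Icc 1 k, ithLargest f i = ∑ j ∈ range k, ithLargest f (j + 1) := by
        rw [range_eq_Ico, sum_Ico_add' (ithLargest f) 0 k 1, zero_add, Ico_add_one_right_eq_Icc]
    _ = ∑ j : Fin k, ithLargest f (j + 1) := (Fin.sum_univ_eq_sum_range _ k).symm
    _ = ∑ v ∈ topIndices f hk, f v := by
        rw [topIndices, sum_map]
        exact sum_congr rfl fun j _ => ithLargest_succ f (j.castLE hk)

variable {f}

theorem ithLargest_nonneg (hf : ∀ v, 0 ≤ f v) (i : ℕ) : 0 ≤ ithLargest f i := by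
  unfold ithLargest
  split_ifs
  exacts [hf _, le_rfl]

theorem antitone_apply_sort_rev : Antitone fun j : Fin n => f (Tuple.sort f j.rev) :=
  fun _ _ hij => Tuple.monotone_sort f (Fin.rev_le_rev.2 hij)

theorem ithLargest_le_of_mem_topIndices {hk : k ≤ n} {v : Fin n} (hv : v ∈ topIndices f hk) :
    ithLargest f k ≤ f v := by
  obtain ⟨j, rfl⟩ := mem_topIndices.1 hv
  obtain ⟨m, rfl⟩ := Nat.exists_eq_add_one.2 j.pos
  rw [ithLargest_succ f ⟨m, hk⟩]
  exact antitone_apply_sort_rev (Fin.mk_le_mk.2 (Nat.lt_succ_iff.1 j.isLt))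

theorem le_ithLargest_of_notMem_topIndices (hk₁ : 1 ≤ k) {hk : k ≤ n} {v : Fin n}
    (hv : v ∉ topIndices f hk) : f v ≤ ithLargest f k := by
  obtain ⟨m, rfl⟩ := Nat.exists_eq_add_one.2 hk₁
  obtain ⟨j, rfl⟩ := (Fin.revPerm.trans (Tuple.sort f)).surjective v
  have hj : m ≤ j := by
    by_contra! hjm
    exact hv (mem_topIndices.2 ⟨⟨j, by omega⟩, rfl⟩)
  rw [ithLargest_succ f ⟨m, hk⟩]
  exact antitone_apply_sort_rev (Fin.mk_le_mk.2 hj)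

theorem sum_mul_le_sum_ithLargest {w : Fin n → ℝ} (hk₁ : 1 ≤ k) (hk : k ≤ n) (hf : ∀ v, 0 ≤ f v)
    (hw₀ : ∀ v, 0 ≤ w v) (hw₁ : ∀ v, w v ≤ 1) (hw : ∑ v, w v ≤ k) :
    ∑ v, f v * w v ≤ ∑ i ∈ Icc 1 k, ithLargest f i := by
  rw [sum_ithLargest_eq_sum_topIndices f hk]
  exact sum_mul_le_sum_of_threshold (ithLargest_nonneg hf k)
    (fun _ => ithLargest_le_of_mem_topIndices) (fun _ => le_ithLargest_of_notMem_topIndices hk₁)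
    hw₀ hw₁ (by rwa [card_topIndices])

end TopEntries

section ContractiveFamily

variable {V E : Type*} [NormedAddCommGroup E]

theorem norm_sum_sq_le_card_mul_sum_norm_sq (p : V → E) (L : Finset V) :
    ‖∑ u ∈ L, p u‖ ^ 2 ≤ #L * ∑ u ∈ L, ‖p u‖ ^ 2 :=
  (pow_le_pow_left₀ (norm_nonneg _) (norm_sum_le _ _) 2).trans sq_sum_le_card_mul_sum_sq

/-- The amount by which `‖p h + p u‖ ^ 2` exceeds the sum of the weight `1` at `h` and the weight
`2 * ‖p u‖ ^ 2` at `u`. -/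
def edgeDeficit (p : V → E) (h u : V) : ℝ :=
  ‖p h + p u‖ ^ 2 - 1 - 2 * ‖p u‖ ^ 2

section NormedSpace

variable [NormedSpace ℝ E]

/-- A family of vectors is contractive if it is the image of an orthonormal family under a linear
contraction. This is encoded as the Bessel-type bound on its finite linear combinations. -/
def IsContractiveFamily (p : V → E) : Prop :=
  ∀ (s : Finset V) (c : V → ℝ), ‖∑ v ∈ s, c v • p v‖ ^ 2 ≤ ∑ v ∈ s, c v ^ 2

namespace IsContractiveFamily

variable {p : V → E} (hp : IsContractiveFamily p)
include hp

theorem norm_smul_add_sum_sq_le {h : V} {L : Finset V} (hL : h ∉ L) (t : ℝ) :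
    ‖t • p h + ∑ u ∈ L, p u‖ ^ 2 ≤ t ^ 2 + #L := by
  classical
  have coeff {u : V} (hu : u ∈ L) : Function.update (1 : V → ℝ) h t u = 1 :=
    Function.update_of_ne (ne_of_mem_of_not_mem hu hL) _ _
  calc ‖t • p h + ∑ u ∈ L, p u‖ ^ 2
      = ‖∑ v ∈ insert h L, Function.update (1 : V → ℝ) h t v • p v‖ ^ 2 := by
        rw [sum_insert hL, Function.update_self]
        congr 3
        exact sum_congr rfl fun u hu => by rw [coeff hu, one_smul]
    _ ≤ ∑ v ∈ insert h L, Function.update (1 : V → ℝ) h t v ^ 2 := hp _ _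
    _ = t ^ 2 + #L := by
        rw [sum_insert hL, Function.update_self,
          sum_congr rfl fun u hu => by rw [coeff hu, one_pow], sum_const, nsmul_one]

theorem norm_add_sq_le_two {u v : V} (huv : u ≠ v) : ‖p u + p v‖ ^ 2 ≤ 2 := by
  simpa [one_add_one_eq_two] using hp.norm_smul_add_sum_sq_le (notMem_singleton.2 huv) 1

end IsContractiveFamily

end NormedSpace

variable [InnerProductSpace ℝ E]

theorem norm_add_sq_le_two_mul_add (x y : E) : ‖x + y‖ ^ 2 ≤ 2 * ‖x‖ ^ 2 + 2 * ‖y‖ ^ 2 := by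
  linarith [parallelogram_law_with_norm ℝ x y, sq_nonneg ‖x - y‖]

theorem sum_edgeDeficit_eq (p : V → E) (h : V) (L : Finset V) :
    ∑ u ∈ L, edgeDeficit p h u =
      #L * (‖p h‖ ^ 2 - 1) + 2 * inner ℝ (p h) (∑ u ∈ L, p u) - ∑ u ∈ L, ‖p u‖ ^ 2 := by
  have expand (u : V) :
      edgeDeficit p h u = (‖p h‖ ^ 2 - 1) + 2 * inner ℝ (p h) (p u) - ‖p u‖ ^ 2 := by
    rw [edgeDeficit, norm_add_sq_real]
    ring
  simp only [expand, sum_sub_distrib, sum_add_distrib, sum_const, nsmul_eq_mul, mul_sum, inner_sum]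
  ring

namespace IsContractiveFamily

variable {p : V → E} (hp : IsContractiveFamily p)
include hp

theorem sum_edgeDeficit_le {h : V} (hh : 1 ≤ 2 * ‖p h‖ ^ 2) {L : Finset V} (hL : h ∉ L) :
    ∑ u ∈ L, edgeDeficit p h u ≤ 2 * ‖p h‖ ^ 2 - 1 := by
  rcases L.eq_empty_or_nonempty with rfl | hne
  · simpa using hh
  have hm : (1 : ℝ) ≤ #L := by exact_mod_cast hne.card_pos
  have cauchySchwarz := norm_sum_sq_le_card_mul_sum_norm_sq p L
  have contraction := hp.norm_smul_add_sum_sq_le hL (#L : ℝ)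
  have distance := sq_nonneg ‖p h - ∑ u ∈ L, p u‖
  rw [norm_add_sq_real, norm_smul, real_inner_smul_left, Real.norm_natCast, mul_pow] at contraction
  rw [norm_sub_sq_real] at distance
  rw [sum_edgeDeficit_eq]
  generalize (#L : ℝ) = m at *
  generalize ∑ u ∈ L, ‖p u‖ ^ 2 = B at *
  generalize inner ℝ (p h) (∑ u ∈ L, p u) = C at *
  generalize ‖∑ u ∈ L, p u‖ ^ 2 = S at *
  generalize ‖p h‖ ^ 2 = a at *
  have scaled_claim : 0 ≤ m * (m + 1) * (2 * a - 1 - (m * (a - 1) + 2 * C - B)) := by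
    linear_combination (m + 1) * cauchySchwarz + (m - 1) * contraction + 2 * m * distance
  linarith [nonneg_of_mul_nonneg_right scaled_claim (by positivity)]

theorem sum_max_edgeDeficit_le {h : V} (hh : 1 ≤ 2 * ‖p h‖ ^ 2) {L : Finset V} (hL : h ∉ L) :
    ∑ u ∈ L, max 0 (edgeDeficit p h u) ≤ 2 * ‖p h‖ ^ 2 - 1 := by
  calc ∑ u ∈ L, max 0 (edgeDeficit p h u)
      = ∑ u ∈ L with 0 < edgeDeficit p h u, edgeDeficit p h u := by
        rw [sum_filter]
        exact sum_congr rfl fun u _ => max_def_lt _ _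
    _ ≤ 2 * ‖p h‖ ^ 2 - 1 := hp.sum_edgeDeficit_le hh (mt mem_filter.1 fun hmem => hL hmem.1)

end IsContractiveFamily

end ContractiveFamily

section CoverWeight

variable {V E : Type*} [Fintype V] [NormedAddCommGroup E]

/-- The indices at which the weight `2 * ‖p v‖ ^ 2` exceeds the cap `1`. -/
noncomputable def heavy (p : V → E) : Finset V :=
  {v | 1 < 2 * ‖p v‖ ^ 2}

theorem mem_heavy {p : V → E} {v : V} : v ∈ heavy p ↔ 1 < 2 * ‖p v‖ ^ 2 := by
  simp [heavy]

/-- The weight `2 * ‖p v‖ ^ 2`, raised by all edge deficits towards heavy indices and then capped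
at `1`: a fractional vertex cover of the pairs `u ≠ v` with demands `‖p u + p v‖ ^ 2`. -/
noncomputable def coverWeight (p : V → E) (v : V) : ℝ :=
  min 1 (2 * ‖p v‖ ^ 2 + ∑ h ∈ heavy p, max 0 (edgeDeficit p h v))

variable (p : V → E)

theorem sum_heavy_max_edgeDeficit_nonneg (v : V) :
    0 ≤ ∑ h ∈ heavy p, max 0 (edgeDeficit p h v) :=
  sum_nonneg fun _ _ => le_max_left _ _

theorem coverWeight_nonneg (v : V) : 0 ≤ coverWeight p v :=
  le_min zero_le_one (add_nonneg (by positivity) (sum_heavy_max_edgeDeficit_nonneg p v))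

theorem coverWeight_le_one (v : V) : coverWeight p v ≤ 1 :=
  min_le_left _ _

variable {p}

theorem coverWeight_of_mem_heavy {v : V} (hv : v ∈ heavy p) : coverWeight p v = 1 :=
  min_eq_left (by linarith [mem_heavy.1 hv, sum_heavy_max_edgeDeficit_nonneg p v])

theorem two_mul_norm_sq_le_coverWeight {v : V} (hv : v ∉ heavy p) :
    2 * ‖p v‖ ^ 2 ≤ coverWeight p v :=
  le_min (not_lt.1 (mt mem_heavy.2 hv))
    (le_add_of_nonneg_right (sum_heavy_max_edgeDeficit_nonneg p v))

namespace IsContractiveFamily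

theorem norm_add_sq_le_one_add_coverWeight [NormedSpace ℝ E] (hp : IsContractiveFamily p)
    {h v : V} (hh : h ∈ heavy p) (hne : h ≠ v) :
    ‖p h + p v‖ ^ 2 ≤ 1 + coverWeight p v := by
  have deficit_le : edgeDeficit p h v ≤ ∑ h ∈ heavy p, max 0 (edgeDeficit p h v) :=
    (le_max_right 0 _).trans
      (single_le_sum (f := fun h => max 0 (edgeDeficit p h v)) (fun _ _ => le_max_left _ _) hh)
  rw [← sub_le_iff_le_add']
  refine le_min (by linarith [hp.norm_add_sq_le_two hne]) ?_
  rw [edgeDeficit] at deficit_le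
  linarith

variable [InnerProductSpace ℝ E] (hp : IsContractiveFamily p)
include hp

theorem norm_add_sq_le_coverWeight_add {u v : V} (huv : u ≠ v) :
    ‖p u + p v‖ ^ 2 ≤ coverWeight p u + coverWeight p v := by
  by_cases hu : u ∈ heavy p
  · rw [coverWeight_of_mem_heavy hu]
    exact hp.norm_add_sq_le_one_add_coverWeight hu huv
  by_cases hv : v ∈ heavy p
  · rw [coverWeight_of_mem_heavy hv, add_comm (p u), add_comm (coverWeight p u)]
    exact hp.norm_add_sq_le_one_add_coverWeight hv huv.symm
  · exact (norm_add_sq_le_two_mul_add _ _).trans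
      (add_le_add (two_mul_norm_sq_le_coverWeight hu) (two_mul_norm_sq_le_coverWeight hv))

theorem sum_coverWeight_le : ∑ v, coverWeight p v ≤ 2 * ∑ v, ‖p v‖ ^ 2 := by
  classical
  have deficits_le : ∑ v ∈ (heavy p)ᶜ, ∑ h ∈ heavy p, max 0 (edgeDeficit p h v) ≤
      ∑ h ∈ heavy p, (2 * ‖p h‖ ^ 2 - 1) := by
    rw [sum_comm]
    exact sum_le_sum fun h hh =>
      hp.sum_max_edgeDeficit_le (mem_heavy.1 hh).le (mt mem_compl.1 (not_not.2 hh))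
  calc ∑ v, coverWeight p v
      = ∑ v ∈ heavy p, coverWeight p v + ∑ v ∈ (heavy p)ᶜ, coverWeight p v :=
        (sum_add_sum_compl _ _).symm
    _ ≤ ∑ v ∈ heavy p, 1 +
          ∑ v ∈ (heavy p)ᶜ, (2 * ‖p v‖ ^ 2 + ∑ h ∈ heavy p, max 0 (edgeDeficit p h v)) := by
        gcongr with v _ v _
        exacts [coverWeight_le_one p v, min_le_right _ _]
    _ ≤ ∑ v ∈ heavy p, 1 +
          (∑ v ∈ (heavy p)ᶜ, 2 * ‖p v‖ ^ 2 + ∑ h ∈ heavy p, (2 * ‖p h‖ ^ 2 - 1)) := by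
        rw [sum_add_distrib]
        gcongr
    _ = 2 * ∑ v, ‖p v‖ ^ 2 := by
        rw [mul_sum, ← sum_add_sum_compl (heavy p) (fun v => 2 * ‖p v‖ ^ 2), sum_sub_distrib]
        ring

end IsContractiveFamily

end CoverWeight

section RowVec

variable {V ι : Type*} [Fintype ι] {b : ι → EuclideanSpace ℝ V}

/-- The `v`-th row of the matrix whose columns are the vectors `b i`. -/
def rowVec (b : ι → EuclideanSpace ℝ V) (v : V) : EuclideanSpace ℝ ι :=
  WithLp.toLp 2 fun i => b i v

theorem norm_rowVec_add_sq (u v : V) :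
    ‖rowVec b u + rowVec b v‖ ^ 2 = ∑ i, (b i u + b i v) ^ 2 := by
  simp [EuclideanSpace.real_norm_sq_eq, rowVec]

variable [Fintype V]

theorem isContractiveFamily_rowVec (hb : Orthonormal ℝ b) : IsContractiveFamily (rowVec b) := by
  classical
  intro s c
  let x : EuclideanSpace ℝ V := WithLp.toLp 2 fun v => if v ∈ s then c v else 0
  calc ‖∑ v ∈ s, c v • rowVec b v‖ ^ 2 = ∑ i, ‖inner ℝ (b i) x‖ ^ 2 := by
        simp [EuclideanSpace.real_norm_sq_eq, rowVec, x, PiLp.inner_apply]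
    _ ≤ ‖x‖ ^ 2 := hb.sum_inner_products_le x
    _ = ∑ v ∈ s, c v ^ 2 := by simp [EuclideanSpace.real_norm_sq_eq, x, ite_pow]

theorem sum_norm_rowVec_sq (hb : Orthonormal ℝ b) :
    ∑ v, ‖rowVec b v‖ ^ 2 = Fintype.card ι := by
  calc ∑ v, ‖rowVec b v‖ ^ 2 = ∑ i, ‖b i‖ ^ 2 := by
        simp only [EuclideanSpace.real_norm_sq_eq, rowVec]
        exact sum_comm
    _ = Fintype.card ι := by simp [hb.1]

end RowVec

section SignlessLaplacian

open scoped Matrix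

variable {V : Type*} [Fintype V] (G : SimpleGraph V) [DecidableRel G.Adj]

theorem sum_sum_neighborFinset_add (w : V → ℝ) :
    ∑ u, ∑ v ∈ G.neighborFinset u, (w u + w v) = 2 * ∑ v, G.degree v * w v := by
  have swap : ∑ u, ∑ v ∈ G.neighborFinset u, w v = ∑ v, ∑ _u ∈ G.neighborFinset v, w v :=
    sum_comm' fun u v => by simp [G.adj_comm]
  simp only [sum_add_distrib, swap, sum_const, SimpleGraph.card_neighborFinset_eq_degree,
    nsmul_eq_mul, two_mul]

variable [DecidableEq V]

theorem two_mul_dotProduct_degMatrix_add_adjMatrix_mulVec (x : V → ℝ) :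
    2 * (x ⬝ᵥ (G.degMatrix ℝ + G.adjMatrix ℝ) *ᵥ x) =
      ∑ u, ∑ v ∈ G.neighborFinset u, (x u + x v) ^ 2 := by
  have diagonal : 2 * (x ⬝ᵥ G.degMatrix ℝ *ᵥ x) =
      ∑ u, ∑ v ∈ G.neighborFinset u, (x u ^ 2 + x v ^ 2) := by
    simp only [sum_sum_neighborFinset_add, G.dotProduct_mulVec_degMatrix, mul_assoc, sq]
  have offDiagonal : x ⬝ᵥ G.adjMatrix ℝ *ᵥ x = ∑ u, ∑ v ∈ G.neighborFinset u, x u * x v := by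
    simp only [dotProduct, G.adjMatrix_mulVec_apply, mul_sum]
  rw [Matrix.add_mulVec, dotProduct_add, mul_add, diagonal, offDiagonal]
  simp only [mul_sum, ← sum_add_distrib]
  exact sum_congr rfl fun u _ => sum_congr rfl fun v _ => by ring

theorem sum_dotProduct_degMatrix_add_adjMatrix_mulVec_le {ι : Type*} [Fintype ι]
    {b : ι → EuclideanSpace ℝ V} (hb : Orthonormal ℝ b) :
    ∑ i, b i ⬝ᵥ (G.degMatrix ℝ + G.adjMatrix ℝ) *ᵥ b i ≤
      ∑ v, G.degree v * coverWeight (rowVec b) v := by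
  refine le_of_mul_le_mul_left ?_ (zero_lt_two' ℝ)
  calc 2 * ∑ i, b i ⬝ᵥ (G.degMatrix ℝ + G.adjMatrix ℝ) *ᵥ b i
      = ∑ u, ∑ v ∈ G.neighborFinset u, ‖rowVec b u + rowVec b v‖ ^ 2 := by
        simp only [mul_sum, two_mul_dotProduct_degMatrix_add_adjMatrix_mulVec, norm_rowVec_add_sq]
        rw [sum_comm]
        exact sum_congr rfl fun _ _ => sum_comm
    _ ≤ ∑ u, ∑ v ∈ G.neighborFinset u, (coverWeight (rowVec b) u + coverWeight (rowVec b) v) := by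
        gcongr with u _ v hv
        exact (isContractiveFamily_rowVec hb).norm_add_sq_le_coverWeight_add
          ((G.mem_neighborFinset u v).1 hv).ne
    _ = 2 * ∑ v, G.degree v * coverWeight (rowVec b) v := sum_sum_neighborFinset_add G _

end SignlessLaplacian

/-- for a graph `G` on `n` vertices and `1 ≤ k ≤ n/2`, the sum of the `k`
largest signless Laplacian eigenvalues of `G` is at most the sum of the `2k` largest vertex
degrees of `G`. -/
theorem sum_signlessLapEigs_le_sum_degrees {n : ℕ} (G : SimpleGraph (Fin n))
    [DecidableRel G.Adj] (k : ℕ) (hk1 : 1 ≤ k) (hk2 : k ≤ n / 2) :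
    ∑ i ∈ Finset.Icc 1 k, ithLargest (signlessLapEigs G) i ≤
      ∑ i ∈ Finset.Icc 1 (2 * k), ithLargest (degTuple G) i := by
  have hkn : k ≤ n := by omega
  let T := topIndices (signlessLapEigs G) hkn
  let b : T → EuclideanSpace ℝ (Fin n) := fun i => (isHermitian_signlessLap G).eigenvectorBasis i
  have hb : Orthonormal ℝ b :=
    (isHermitian_signlessLap G).eigenvectorBasis.orthonormal.comp _ Subtype.val_injective
  have total_weight : ∑ v, coverWeight (rowVec b) v ≤ (2 * k : ℕ) := by
    have := (isContractiveFamily_rowVec hb).sum_coverWeight_le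
    rw [sum_norm_rowVec_sq hb, Fintype.card_coe, card_topIndices] at this
    exact_mod_cast this
  calc ∑ i ∈ Icc 1 k, ithLargest (signlessLapEigs G) i = ∑ i ∈ T, signlessLapEigs G i :=
        sum_ithLargest_eq_sum_topIndices _ hkn
    _ = ∑ i : T, b i ⬝ᵥ (signlessLap G).mulVec (b i) := by
        rw [← sum_coe_sort]
        exact sum_congr rfl fun i _ => (isHermitian_signlessLap G).eigenvalues_eq i
    _ ≤ ∑ v, degTuple G v * coverWeight (rowVec b) v :=
        sum_dotProduct_degMatrix_add_adjMatrix_mulVec_le G hb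
    _ ≤ ∑ i ∈ Icc 1 (2 * k), ithLargest (degTuple G) i :=
        sum_mul_le_sum_ithLargest (by omega) (by omega) (fun _ => Nat.cast_nonneg _)
          (coverWeight_nonneg _) (coverWeight_le_one _) total_weight
end
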